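/- Let m be an odd positive integer, F = 𝔽_{2^m}, and suppose the power function f : F → F, f(x) = x^d (for a positive integer d), is crooked. Then there exist natural numbers j < k with gcd(k − j, m) = 1 such that x^d = x^{2^k + 2^j} for all x ∈ F. -/

import Mathlib

/-- `f` is crooked: `f 0 = 0`; `f x + f y + f z ≠ f (x+y+z)` for pairwise
distinct `x, y, z`; and `f x + f y + f z ≠ f (x+a) + f (y+a) + f (z+a)`
for every `a ≠ 0`. -/
def IsCrooked {F : Type*} [Field F] (f : F → F) : Prop :=
  f 0 = 0 ∧
  (∀ x y z : F, x ≠ y → x ≠ z → y ≠ z → f x + f y + f z ≠ f (x + y + z)) ∧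
  (∀ x y z a : F, a ≠ 0 → f x + f y + f z ≠ f (x + a) + f (y + a) + f (z + a))

/-- Cardinality of the image of a function whose fibres are the pairs `{x, x+1}`. -/
theorem crk_card_image {F : Type*} [Field F] [Fintype F] [DecidableEq F] (g : F → F)
    (h : ∀ x y, g y = g x ↔ (y = x ∨ y = x + 1)) :
    2 * (Finset.univ.image g).card = Fintype.card F := by
  have h1 := Finset.card_eq_sum_card_image g Finset.univ
  rw [Finset.card_univ] at h1
  rw [h1, Finset.sum_const_nat (m := 2)]
  · ring
  · intro b hb
    obtain ⟨x, -, rfl⟩ := Finset.mem_image.1 hb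
    have : (Finset.univ.filter fun a => g a = g x) = {x, x + 1} := by
      ext y; simp [h x y]
    rw [this, Finset.card_pair]
    simp

theorem crk_pow_mod {m : ℕ} {F : Type*} [Field F] [Fintype F]
    (hcard : Fintype.card F = 2 ^ m) (x : F) (n : ℕ) : x ^ 2 ^ n = x ^ 2 ^ (n % m) := by
  conv_lhs => rw [← Nat.div_add_mod n m, pow_add, pow_mul, pow_mul, ← hcard,
    FiniteField.pow_card_pow]

theorem crk_frob {m : ℕ} [NeZero m] {F : Type*} [Field F] [Fintype F]
    (hcard : Fintype.card F = 2 ^ m) (x : F) (a b : ZMod m) :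
    (x ^ 2 ^ a.val) ^ 2 ^ b.val = x ^ 2 ^ (a + b).val := by
  rw [← pow_mul, ← pow_add, crk_pow_mod hcard, ZMod.val_add]

/-- The trace identity. -/
theorem crk_trace {m : ℕ} [NeZero m] {F : Type*} [Field F] [Fintype F] [CharP F 2]
    (hcard : Fintype.card F = 2 ^ m)
    (d : ℕ) (hf : IsCrooked (fun x : F => x ^ d)) (x : F) :
    ∑ g : ZMod m, (1 + x ^ d + (x + 1) ^ d) ^ 2 ^ g.val = 0 := by
  classical
  obtain ⟨h0, h2, h3⟩ := hf
  simp only at h0 h2 h3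
  have two : ∀ z : F, z + z = 0 := CharTwo.add_self_eq_zero
  have hsq : ∀ z w : F, (z + w) ^ 2 = z ^ 2 + w ^ 2 := fun z w => CharTwo.add_sq z w
  set D : F → F := fun x => x ^ d + (x + 1) ^ d with hD
  have hD0 : D 0 = 1 := by simp [hD, h0]
  have hDsq : ∀ z, (D z) ^ 2 = D (z ^ 2) := by
    intro z
    have e : z ^ 2 + 1 = (z + 1) ^ 2 := by rw [hsq, one_pow]
    simp only [hD]
    rw [e, hsq, ← pow_mul, ← pow_mul, ← pow_mul, ← pow_mul, mul_comm]
  have hD3 : ∀ a b c, D a + D b ≠ D c := by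
    intro a b c h
    apply h3 a b c 1 one_ne_zero
    simp only [hD] at h
    linear_combination h - two ((a+1)^d) - two ((b+1)^d) + two (c^d)
  have hDf : ∀ a b, D b = D a ↔ (b = a ∨ b = a + 1) := by
    intro a b
    constructor
    · intro h
      by_contra hcon
      push Not at hcon
      refine h2 a (a + 1) b (by simp) (fun h => hcon.1 h.symm) (fun h => hcon.2 h.symm) ?_
      have e : a + (a + 1) + b = b + 1 := by linear_combination two a
      rw [e]
      simp only [hD] at h
      linear_combination two (b ^ d) - h
    · rintro (rfl | rfl)
      · rfl
      · have e : a + 1 + 1 = a := by linear_combination two 1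
        simp only [hD, e]; ring
  have hWf : ∀ a b : F, b + b ^ 2 = a + a ^ 2 ↔ (b = a ∨ b = a + 1) := by
    intro a b
    have : b + b ^ 2 = a + a ^ 2 ↔ (b - a) * (b - (a + 1)) = 0 := by
      rw [← sub_eq_zero]
      have : b + b ^ 2 - (a + a ^ 2) = (b - a) * (b - (a + 1)) := by
        linear_combination b * two 1 + (a * b) * two 1 - two a - two (a^2)
      rw [this]
    rw [this, mul_eq_zero, sub_eq_zero, sub_eq_zero]
  have c1 := crk_card_image D hDf
  have c2 := crk_card_image (fun v : F => v + v ^ 2) hWf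
  set H := Finset.univ.image D with hH
  set W := Finset.univ.image (fun v : F => v + v ^ 2) with hW
  have hcompl : Hᶜ.card = H.card := by rw [Finset.card_compl]; omega
  have hV : H.image (fun h => h + 1) = Hᶜ := by
    apply Finset.eq_of_subset_of_card_le
    · intro z hz
      simp only [hH, Finset.mem_image, Finset.mem_compl, Finset.mem_univ, true_and] at hz ⊢
      rintro ⟨b, hb⟩
      obtain ⟨_, ⟨a, rfl⟩, rfl⟩ := hz
      rw [← hD0] at hb
      exact hD3 _ _ _ hb.symm
    · rw [Finset.card_image_of_injective _ (add_left_injective 1), hcompl]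
  have hHW : ∀ z, D z + (D z) ^ 2 ∈ Hᶜ := by
    intro z
    simp only [hH, Finset.mem_image, Finset.mem_compl, Finset.mem_univ, true_and]
    rintro ⟨b, hb⟩
    rw [hDsq] at hb
    exact hD3 _ _ _ hb.symm
  have hWH : W = Hᶜ := by
    apply Finset.eq_of_subset_of_card_le
    · intro z hz
      obtain ⟨v, -, rfl⟩ := Finset.mem_image.1 hz
      by_cases hv : v ∈ H
      · obtain ⟨a, -, rfl⟩ := Finset.mem_image.1 hv
        exact hHW a
      · rw [← Finset.mem_compl, ← hV] at hv
        obtain ⟨h, hh, rfl⟩ := Finset.mem_image.1 hv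
        obtain ⟨a, -, rfl⟩ := Finset.mem_image.1 hh
        have e : D a + 1 + (D a + 1) ^ 2 = D a + (D a) ^ 2 := by
          rw [hsq]; linear_combination two 1
        simp only [e]
        exact hHW a
    · rw [hcompl]; omega
  have hx : 1 + x ^ d + (x + 1) ^ d ∈ W := by
    rw [hWH, ← hV]
    exact Finset.mem_image.2 ⟨D x, Finset.mem_image_of_mem _ (Finset.mem_univ _), by
      simp only [hD]; ring⟩
  obtain ⟨v, -, hv⟩ := Finset.mem_image.1 hx
  rw [← hv]
  simp only [add_pow_char_pow, Finset.sum_add_distrib]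
  have key : ∑ g : ZMod m, (v ^ 2) ^ 2 ^ g.val = ∑ g : ZMod m, v ^ 2 ^ g.val := by
    rw [← Equiv.sum_comp (Equiv.addRight (1 : ZMod m)) (fun g => v ^ 2 ^ g.val)]
    refine Finset.sum_congr rfl fun g _ => ?_
    rw [← pow_mul, ← pow_succ', crk_pow_mod hcard]
    simp [ZMod.val_add, ZMod.val_one_eq_one_mod]
  rw [key, two]

/-- The monomial attached to a set of bit positions. -/
def crkMon {m : ℕ} {F : Type*} [Field F] (T : Finset (ZMod m)) (x : F) : F :=
  ∏ s ∈ T, x ^ 2 ^ s.val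

/-- The exponent of the monomial. -/
def crkExp {m : ℕ} (T : Finset (ZMod m)) : ℕ := ∑ s ∈ T, 2 ^ s.val

theorem crkMon_eq {m : ℕ} {F : Type*} [Field F] (T : Finset (ZMod m)) (x : F) :
    crkMon T x = x ^ crkExp T := by
  rw [crkMon, crkExp, Finset.prod_pow_eq_pow_sum]

theorem crkExp_eq {m : ℕ} [NeZero m] (T : Finset (ZMod m)) :
    crkExp T = ∑ i ∈ T.map ⟨ZMod.val, ZMod.val_injective m⟩, 2 ^ i := by
  simp [crkExp]

theorem crkExp_inj {m : ℕ} [NeZero m] : Function.Injective (crkExp (m := m)) := by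
  intro T U h
  rw [crkExp_eq, crkExp_eq] at h
  exact Finset.map_injective _ (Finset.geomSum_injective le_rfl h)

theorem crkExp_lt {m : ℕ} [NeZero m] (T : Finset (ZMod m)) : crkExp T < 2 ^ m := by
  rw [crkExp_eq]
  apply Nat.geomSum_lt le_rfl
  intro k hk
  obtain ⟨s, -, rfl⟩ := Finset.mem_map.1 hk
  exact ZMod.val_lt s

theorem crkExp_surj {m : ℕ} [NeZero m] (n : ℕ) (hn : n < 2 ^ m) :
    ∃ T : Finset (ZMod m), crkExp T = n := by
  have hb : Function.Bijective (fun T : Finset (ZMod m) => (⟨crkExp T, crkExp_lt T⟩ : Fin (2 ^ m))) := by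
    rw [Fintype.bijective_iff_injective_and_card]
    refine ⟨fun T U h => crkExp_inj (by simpa using h), ?_⟩
    simp [ZMod.card]
  obtain ⟨T, hT⟩ := hb.2 ⟨n, hn⟩
  exact ⟨T, by simpa using hT⟩

theorem crk_indep {m : ℕ} [NeZero m] {F : Type*} [Field F] [Fintype F]
    (hcard : Fintype.card F = 2 ^ m) (c : Finset (ZMod m) → F)
    (h : ∀ x : F, ∑ U, c U * crkMon U x = 0) (U : Finset (ZMod m)) : c U = 0 := by
  classical
  set P : Polynomial F := ∑ U, Polynomial.monomial (crkExp U) (c U) with hP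
  have hP0 : P = 0 := by
    apply Polynomial.eq_zero_of_natDegree_lt_card_of_eval_eq_zero P Function.injective_id
    · intro x
      rw [hP, Polynomial.eval_finsetSum, ← h x]
      refine Finset.sum_congr rfl fun U _ => ?_
      rw [Polynomial.eval_monomial, crkMon_eq]; rfl
    · rw [hcard]
      apply lt_of_le_of_lt (b := 2 ^ m - 1)
      · apply Polynomial.natDegree_sum_le_of_forall_le
        intro U _
        exact (Polynomial.natDegree_monomial_le _).trans (Nat.le_sub_one_of_lt (crkExp_lt U))
      · exact Nat.sub_lt (by positivity) one_pos
  have := congrArg (fun p => Polynomial.coeff p (crkExp U)) hP0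
  simpa [hP, Polynomial.finsetSum_coeff, Polynomial.coeff_monomial, crkExp_inj.eq_iff] using this

theorem crkMon_shift {m : ℕ} [NeZero m] {F : Type*} [Field F] [Fintype F]
    (hcard : Fintype.card F = 2 ^ m) (T : Finset (ZMod m)) (g : ZMod m) (x : F) :
    (crkMon T x) ^ 2 ^ g.val = crkMon (T.map (Equiv.addRight g).toEmbedding) x := by
  simp only [crkMon, Finset.prod_map, ← Finset.prod_pow, crk_frob hcard]
  simp

theorem crk_even {m : ℕ} [NeZero m] {F : Type*} [Field F] [Fintype F] [CharP F 2]
    (hcard : Fintype.card F = 2 ^ m)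
    (d : ℕ) (hf : IsCrooked (fun x : F => x ^ d)) (S : Finset (ZMod m)) (hS : S.Nonempty)
    (hd : ∀ x : F, x ^ d = crkMon S x) (U : Finset (ZMod m)) (hU : U.Nonempty)
    (hUS : U.card < S.card) :
    Even (Finset.univ.filter fun g : ZMod m =>
      U.map (Equiv.addRight g).toEmbedding ⊆ S).card := by
  classical
  have two : ∀ z : F, z + z = 0 := CharTwo.add_self_eq_zero
  set A : Finset (Finset (ZMod m)) := (S.powerset.erase ∅).erase S with hA
  have hsum : ∀ x : F, ∑ T ∈ A, crkMon T x = 1 + x ^ d + (x + 1) ^ d := by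
    intro x
    have e1 : (x + 1) ^ d = ∑ T ∈ S.powerset, crkMon T x := by
      rw [hd, crkMon]
      simp only [add_pow_char_pow, one_pow]
      exact Finset.prod_add_one S
    have e2 := Finset.add_sum_erase S.powerset (fun T => crkMon T x) (Finset.empty_mem_powerset S)
    have e3 := Finset.add_sum_erase (S.powerset.erase ∅) (fun T => crkMon T x) (a := S)
      (by simp [hS.ne_empty])
    have e4 : crkMon (∅ : Finset (ZMod m)) x = 1 := by simp [crkMon]
    simp only [e4] at e2 e3
    rw [e1, hd x, ← e2, ← e3]
    linear_combination -two 1 - two (crkMon S x)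
  set c : Finset (ZMod m) → F := fun U =>
    ∑ g : ZMod m, if U.map (Equiv.addRight (-g)).toEmbedding ∈ A then 1 else 0 with hc
  have hc0 : c U = 0 := by
    apply crk_indep hcard
    intro x
    rw [← crk_trace hcard d hf x]
    simp only [hc, Finset.sum_mul]
    rw [Finset.sum_comm]
    refine Finset.sum_congr rfl fun g _ => ?_
    rw [← hsum, sum_pow_char_pow]
    simp only [crkMon_shift hcard]
    rw [← Equiv.sum_comp (Equiv.finsetCongr (Equiv.addRight g))]
    have e : ∀ T : Finset (ZMod m),
        (T.map (Equiv.addRight g).toEmbedding).map (Equiv.addRight (-g)).toEmbedding = T := by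
      intro T
      ext z; simp
    simp [e]
  have hiff : ∀ g : ZMod m, U.map (Equiv.addRight g).toEmbedding ∈ A ↔
      U.map (Equiv.addRight g).toEmbedding ⊆ S := by
    intro g
    simp only [hA, Finset.mem_erase, Finset.mem_powerset]
    refine ⟨fun h => h.2.2, fun h => ⟨fun h' => ?_, fun h' => ?_, h⟩⟩
    · rw [← h', Finset.card_map] at hUS; exact lt_irrefl _ hUS
    · rw [Finset.map_eq_empty] at h'; exact hU.ne_empty h'
  simp only [hc] at hc0
  have hneg := Equiv.sum_comp (Equiv.neg (ZMod m))
    (fun g => if U.map (Equiv.addRight g).toEmbedding ∈ A then (1:F) else 0)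
  simp only [Equiv.neg_apply] at hneg
  rw [hneg] at hc0
  simp only [hiff, Finset.sum_boole] at hc0
  rw [CharP.cast_eq_zero_iff F 2] at hc0
  exact even_iff_two_dvd.2 hc0

theorem crk_aperiodic {m : ℕ} [NeZero m] {F : Type*} [Field F] [Fintype F] [CharP F 2]
    (hcard : Fintype.card F = 2 ^ m)
    (d : ℕ) (hf : IsCrooked (fun x : F => x ^ d)) (S : Finset (ZMod m))
    (hd : ∀ x : F, x ^ d = crkMon S x) (g : ZMod m)
    (hg : S.map (Equiv.addRight g).toEmbedding = S) : g = 0 := by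
  classical
  have hinj : Function.Injective (fun x : F => x ^ d) := by
    intro x y h
    by_contra hne
    apply hf.2.2 x x x (y - x) (sub_ne_zero.2 (Ne.symm hne))
    simp only at h
    simp [h]
  by_contra hg0
  have hx : ∀ x : F, x ^ 2 ^ g.val = x := by
    intro x
    apply hinj
    simp only
    rw [← pow_mul, mul_comm, pow_mul, hd, crkMon_shift hcard, hg]
  have := crk_indep hcard (fun U => if U = {g} then (1:F) else if U = {0} then -1 else 0) (by
    intro x
    have e : ∀ U : Finset (ZMod m), (if U = {g} then (1:F) else if U = {0} then -1 else 0) * crkMon U x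
        = (if U = {g} then crkMon U x else 0) - (if U = {0} then crkMon U x else 0) := by
      intro U
      by_cases h1 : U = {g}
      · subst h1
        simp [hg0]
      · simp [h1]; split_ifs <;> simp
    simp only [e, Finset.sum_sub_distrib]
    simp [crkMon, hx]) {g}
  simp at this

theorem crk_card_le {m : ℕ} [NeZero m] {F : Type*} [Field F] [Fintype F] [CharP F 2]
    (hcard : Fintype.card F = 2 ^ m)
    (d : ℕ) (hf : IsCrooked (fun x : F => x ^ d)) (S : Finset (ZMod m)) 
    (hd : ∀ x : F, x ^ d = crkMon S x) : S.card ≤ 2 := by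
  classical
  by_contra hcon
  push Not at hcon
  have hS : S.Nonempty := Finset.card_pos.1 (by omega)
  have hev := crk_even hcard d hf S hS hd
  have h1 : Even S.card := by
    have := hev {0} (by simp) (by simp; omega)
    simpa using this
  obtain ⟨u, hu⟩ := hS
  have hc1 : (S.erase u).card = S.card - 1 := Finset.card_erase_of_mem hu
  have h2 := hev (S.erase u) (Finset.card_pos.1 (by omega)) (by omega)
  obtain ⟨g, hg0, hg⟩ : ∃ g : ZMod m, g ≠ 0 ∧ ∀ h ∈ S.erase u, h + g ∈ S := by
    by_contra hno
    push Not at hno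
    have : (Finset.univ.filter fun g : ZMod m =>
      (S.erase u).map (Equiv.addRight g).toEmbedding ⊆ S) = {0} := by
      ext g
      simp only [Finset.mem_filter, Finset.mem_univ, true_and, Finset.mem_singleton]
      constructor
      · intro h
        by_contra hg
        obtain ⟨z, hz, hz'⟩ := hno g hg
        exact hz' (h (Finset.mem_map.2 ⟨z, hz, rfl⟩))
      · rintro rfl z hz
        obtain ⟨w, hw, rfl⟩ := Finset.mem_map.1 hz
        simpa using Finset.mem_of_mem_erase hw
    rw [this] at h2
    simp at h2
  have hug : u + g ∉ S := by
    intro hug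
    apply hg0
    apply crk_aperiodic hcard d hf S hd g
    apply Finset.eq_of_subset_of_card_le
    · intro z hz
      obtain ⟨w, hw, rfl⟩ := Finset.mem_map.1 hz
      by_cases hwu : w = u
      · subst hwu; exact hug
      · exact hg w (Finset.mem_erase.2 ⟨hwu, hw⟩)
    · simp
  have h3 := hev {0, g} (by simp) (by rw [Finset.card_pair (Ne.symm hg0)]; omega)
  have : (Finset.univ.filter fun h : ZMod m =>
      ({0, g} : Finset (ZMod m)).map (Equiv.addRight h).toEmbedding ⊆ S) = S.erase u := by
    ext h
    simp only [Finset.mem_filter, Finset.mem_univ, true_and]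
    have : ({0, g} : Finset (ZMod m)).map (Equiv.addRight h).toEmbedding ⊆ S ↔ h ∈ S ∧ h + g ∈ S := by
      simp [Finset.map_insert, Finset.insert_subset_iff, add_comm]
    rw [this]
    constructor
    · rintro ⟨ha, hb⟩
      refine Finset.mem_erase.2 ⟨?_, ha⟩
      rintro rfl
      exact hug hb
    · intro ha
      exact ⟨Finset.mem_of_mem_erase ha, hg h ha⟩
  rw [this, hc1] at h3
  obtain ⟨a, ha⟩ := h1
  obtain ⟨b, hb⟩ := h3
  omega

theorem crk_gcd {m : ℕ} {F : Type*} [Field F] [Fintype F] [CharP F 2]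
    (hcard : Fintype.card F = 2 ^ m) (d j k : ℕ) (hjk : j < k)
    (hf : IsCrooked (fun x : F => x ^ d))
    (hd : ∀ x : F, x ^ d = x ^ (2 ^ k + 2 ^ j)) : Nat.gcd (k - j) m = 1 := by
  classical
  by_contra hg
  have hgpos : 0 < Nat.gcd (k - j) m := Nat.gcd_pos_of_pos_left _ (by omega)
  have hne : Nat.gcd (2 ^ (k - j) - 1) (2 ^ m - 1) ≠ 1 := by
    rw [Nat.pow_sub_one_gcd_pow_sub_one]
    have : 2 ^ 2 ≤ 2 ^ Nat.gcd (k - j) m := Nat.pow_le_pow_right (by norm_num) (by omega)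
    omega
  obtain ⟨p, hp, hpd⟩ := Nat.exists_prime_and_dvd hne
  have hp1 := hpd.trans (Nat.gcd_dvd_left _ _)
  have hp2 := hpd.trans (Nat.gcd_dvd_right _ _)
  haveI : Fact p.Prime := ⟨hp⟩
  obtain ⟨a, ha⟩ := exists_prime_orderOf_dvd_card (G := Fˣ) p (by
    rw [Fintype.card_units, hcard]; exact hp2)
  have ha1 : a ≠ 1 := by
    rintro rfl
    rw [orderOf_one] at ha
    exact hp.one_lt.ne ha
  have hapow : a ^ (2 ^ (k - j) - 1) = 1 := by
    rw [← orderOf_dvd_iff_pow_eq_one, ha]; exact hp1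
  have hF : (a : F) ^ (2 ^ (k - j)) = a := by
    have e : (2 ^ (k - j)) = (2 ^ (k - j) - 1) + 1 := by
      have : 0 < 2 ^ (k - j) := by positivity
      omega
    rw [e, pow_succ]
    have := congrArg (Units.val) hapow
    push_cast at this
    rw [this, one_mul]
  have hkj : (a : F) ^ 2 ^ k = (a : F) ^ 2 ^ j := by
    have e : k = (k - j) + j := by omega
    rw [e, pow_add, pow_mul, hF]
  have hane : (a : F) ≠ 1 := fun h => ha1 (Units.ext h)
  apply hf.2.1 0 1 (a : F) zero_ne_one a.ne_zero.symm hane.symm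
  simp only [hd]
  simp only [pow_add, zero_add, one_pow, add_pow_char_pow, hkj]
  have two : ∀ z : F, z + z = 0 := CharTwo.add_self_eq_zero
  simp
  linear_combination - two ((a : F) ^ 2 ^ j)

/-- Every crooked power function on `𝔽_{2^m}` (`m` odd) has the form
`x ↦ x^(2^k + 2^j)` with `j < k` and `gcd (k - j) m = 1`. -/
theorem crooked_power_function_form {m : ℕ} (hm : 0 < m) (hmodd : Odd m)
    {F : Type*} [Field F] [Fintype F] (hcard : Fintype.card F = 2 ^ m)
    (d : ℕ) (hd : 0 < d) (hf : IsCrooked (fun x : F => x ^ d)) :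
    ∃ j k : ℕ, j < k ∧ Nat.gcd (k - j) m = 1 ∧
      ∀ x : F, x ^ d = x ^ (2 ^ k + 2 ^ j) := by
  classical
  haveI : NeZero m := ⟨hm.ne'⟩
  haveI : Fact (Nat.Prime 2) := ⟨Nat.prime_two⟩
  haveI : CharP F 2 := charP_of_card_eq_prime_pow hcard
  by_cases hm1 : m = 1
  · subst hm1
    refine ⟨0, 1, by norm_num, by norm_num, fun x => ?_⟩
    by_cases hx : x = 0
    · subst hx; simp [hd.ne']
    · have : x ^ (Fintype.card F - 1) = 1 := FiniteField.pow_card_sub_one_eq_one x hx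
      rw [hcard] at this
      have : x = 1 := by simpa using this
      simp [this]
  obtain ⟨S, hS⟩ : ∃ S : Finset (ZMod m), ∀ x : F, x ^ d = crkMon S x := by
    have hq : 1 < 2 ^ m := Nat.one_lt_two_pow hm.ne'
    obtain ⟨S, hS⟩ := crkExp_surj (m := m) ((d - 1) % (2 ^ m - 1) + 1) (by
      have := Nat.mod_lt (d - 1) (show 0 < 2 ^ m - 1 by omega)
      omega)
    refine ⟨S, fun x => ?_⟩
    rw [crkMon_eq, hS]
    by_cases hx : x = 0
    · subst hx; simp [hd.ne']
    · have h1 : x ^ (2 ^ m - 1) = 1 := by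
        rw [← hcard]; exact FiniteField.pow_card_sub_one_eq_one x hx
      have e : d = (2 ^ m - 1) * ((d - 1) / (2 ^ m - 1)) + ((d - 1) % (2 ^ m - 1) + 1) := by
        have := Nat.div_add_mod (d - 1) (2 ^ m - 1)
        omega
      conv_lhs => rw [e, pow_add, pow_mul, h1, one_pow, one_mul]
  have hle := crk_card_le hcard d hf S hS
  have h0 : S.card ≠ 0 := by
    intro h
    rw [Finset.card_eq_zero] at h
    subst h
    have := hS 0
    simp [crkMon, hd.ne'] at this
  have h1 : S.card ≠ 1 := by
    intro h
    obtain ⟨s, rfl⟩ := Finset.card_eq_one.1 h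
    have h4 : 2 ^ 2 ≤ 2 ^ m := Nat.pow_le_pow_right (by norm_num) (by omega)
    obtain ⟨a, ha⟩ : ∃ a : F, a ∉ ({0, 1} : Finset F) := by
      by_contra hno
      push Not at hno
      have : (Finset.univ : Finset F).card ≤ ({0, 1} : Finset F).card :=
        Finset.card_le_card (fun z _ => hno z)
      rw [Finset.card_univ, hcard, Finset.card_pair zero_ne_one] at this
      omega
    simp only [Finset.mem_insert, Finset.mem_singleton, not_or] at ha
    apply hf.2.1 0 1 a zero_ne_one (Ne.symm ha.1) (Ne.symm ha.2)
    simp only [hS]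
    simp [crkMon, add_pow_char_pow]
  obtain ⟨s, t, hst, rfl⟩ := Finset.card_eq_two.1 (show S.card = 2 by omega)
  have hfin : ∀ x : F, x ^ d = x ^ 2 ^ s.val * x ^ 2 ^ t.val := by
    intro x
    rw [hS, crkMon, Finset.prod_pair hst]
  have hval : s.val ≠ t.val := fun h => hst (ZMod.val_injective m h)
  rcases lt_or_gt_of_ne hval with h | h
  · have hx : ∀ x : F, x ^ d = x ^ (2 ^ t.val + 2 ^ s.val) := fun x => by
      rw [hfin, pow_add, mul_comm]
    exact ⟨_, _, h, crk_gcd hcard d _ _ h hf hx, hx⟩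
  · have hx : ∀ x : F, x ^ d = x ^ (2 ^ s.val + 2 ^ t.val) := fun x => by
      rw [hfin, pow_add]
    exact ⟨_, _, h, crk_gcd hcard d _ _ h hf hx, hx⟩
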